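/- arXiv:2505.23609 — 3 statements merged into one kernel-verified Lean document; each statement's English description precedes it below -/
import Mathlib

section
/- Let n ≥ 1, d ≥ 1 and k ≥ 3. Let ρ : S_n → GL_m(ℂ) be a representation such that ρ(g) is unitary for every g. Let f₁, f₂ : S_n → ℂ^d satisfy f₁(σ) = f₂(σ̄σ) for a fixed σ̄ ∈ S_n and every σ ∈ S_n. Then the k-Spectra of f₁ and f₂ are identical: for every G_{k−2} ∈ (S_n)^{k−2} and every multi-index I_k = (i₁,…,i_k) ∈ {1,…,d}^k, one has r̂^(k)_{f₁,I_{k−1}}(G_{k−2}, ρ)† · f̂₁,_{i_k}(ρ) = r̂^(k)_{f₂,I_{k−1}}(G_{k−2}, ρ)† · f̂₂,_{i_k}(ρ). -/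
open scoped Matrix

/-- Fourier transform of `u : S_n → ℂ` at a matrix representation `ρ`:
`û(ρ) = (1/|S_n|) ∑_g u(g) ρ(g)`. -/
noncomputable def fourierPerm {n m : ℕ} (u : Equiv.Perm (Fin n) → ℂ)
    (ρ : Equiv.Perm (Fin n) → Matrix (Fin m) (Fin m) ℂ) : Matrix (Fin m) (Fin m) ℂ :=
  ((Nat.factorial n : ℂ))⁻¹ • ∑ g : Equiv.Perm (Fin n), u g • ρ g

/-- `r̂^(k)_{f,I_{k-1}}(G_{k-2}, ρ) = (1/|S_n|) ∑_{g̃} f_{i_{k-1}}(g̃) (∏_{l=1}^{k-2} f_{i_l}(g̃gₗ)) ρ(g̃)`,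
where the first `k-2` indices are given by `I : Fin p → Fin d` (with `p = k-2`) and the
`(k-1)`-st index is `i`. -/
noncomputable def rhatMulti {n d m p : ℕ} (f : Equiv.Perm (Fin n) → (Fin d → ℂ))
    (I : Fin p → Fin d) (i : Fin d) (G : Fin p → Equiv.Perm (Fin n))
    (ρ : Equiv.Perm (Fin n) → Matrix (Fin m) (Fin m) ℂ) : Matrix (Fin m) (Fin m) ℂ :=
  ((Nat.factorial n : ℂ))⁻¹ • ∑ g : Equiv.Perm (Fin n),
    (f g i * ∏ l : Fin p, f (g * G l) (I l)) • ρ g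

/-!
The entry `r̂^(k)_{f,I}` is itself a Fourier transform, that of the correlation
`g ↦ f_{i_{k-1}}(g) ∏ₗ f_{i_l}(g gₗ)`. Since the `gₗ` multiply on the right, the correlation
commutes with left translation by `σ̄`. Passing from the translate to the original function
multiplies every Fourier transform on the left by `ρ(σ̄)`, and in a product `X† Y` the two factors
cancel because `ρ(σ̄)† ρ(σ̄) = 1`.
-/

section FiniteGroup

open scoped BigOperators

variable {G R A ι κ : Type*}

/-- The correlation `g ↦ f_i(g) ∏ₗ f_{I l}(g τₗ)` of the components of `f : G → (ι → R)`, whose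
Fourier transform is the first factor of a `k`-Spectrum entry. The shifts `τ` and the indices `I`
run over any finite type `κ` in place of `{1, …, k - 2}`. -/
def multiCorrelation [Mul G] [CommMonoid R] [Fintype κ] (f : G → ι → R) (I : κ → ι) (i : ι)
    (τ : κ → G) (g : G) : R :=
  f g i * ∏ l, f (g * τ l) (I l)

/-- The normalised Fourier transform of `u : G → R` at a map `ρ` from a finite type `G` to an
algebra. The factor `1 / |G|` is a scalar in `ℚ≥0`, so that `R` need not be a field. -/
def averagedFourier [Fintype G] [SMul R A] [AddCommMonoid A] [Module ℚ≥0 A] (u : G → R)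
    (ρ : G → A) : A :=
  𝔼 g, u g • ρ g

theorem multiCorrelation_comp_mul_left [Semigroup G] [CommMonoid R] [Fintype κ] (f : G → ι → R)
    (I : κ → ι) (i : ι) (τ : κ → G) (σ : G) :
    multiCorrelation (fun g => f (σ * g)) I i τ = fun g => multiCorrelation f I i τ (σ * g) := by
  funext g
  simp only [multiCorrelation, mul_assoc]

variable [Group G] [Fintype G] [CommSemiring R] [Semiring A] [Algebra ℚ≥0 A] [Algebra R A]

theorem map_mul_averagedFourier_comp_mul_left (ρ : G →ₙ* A) (u : G → R) (σ : G) :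
    ρ σ * averagedFourier (fun g => u (σ * g)) ρ = averagedFourier u ρ := by
  calc ρ σ * averagedFourier (fun g => u (σ * g)) ρ
      = 𝔼 g, u (σ * g) • ρ (σ * g) := by
        simp only [averagedFourier, Finset.mul_expect, mul_smul_comm, map_mul]
    _ = averagedFourier u ρ :=
        Fintype.expect_equiv (Equiv.mulLeft σ) _ (fun g => u g • ρ g) fun _ => rfl

theorem star_averagedFourier_mul_comp_mul_left [StarMul A] (ρ : G →ₙ* A) (u v : G → R) {σ : G}
    (hσ : star (ρ σ) * ρ σ = 1) :
    star (averagedFourier (fun g => u (σ * g)) ρ) * averagedFourier (fun g => v (σ * g)) ρ =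
      star (averagedFourier u ρ) * averagedFourier v ρ := by
  rw [← map_mul_averagedFourier_comp_mul_left ρ u σ,
    ← map_mul_averagedFourier_comp_mul_left ρ v σ, star_mul, mul_assoc,
    ← mul_assoc (star (ρ σ)), hσ, one_mul]

theorem kSpectrum_left_translation_invariant_general [StarMul A] [Fintype κ] (ρ : G →ₙ* A)
    {σ : G} (hσ : star (ρ σ) * ρ σ = 1) {f₁ f₂ : G → ι → R} (hf : ∀ g, f₁ g = f₂ (σ * g))
    (τ : κ → G) (I : κ → ι) (i j : ι) :
    star (averagedFourier (multiCorrelation f₁ I i τ) ρ) * averagedFourier (fun g => f₁ g j) ρ =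
      star (averagedFourier (multiCorrelation f₂ I i τ) ρ) *
        averagedFourier (fun g => f₂ g j) ρ := by
  obtain rfl : f₁ = fun g => f₂ (σ * g) := funext hf
  rw [multiCorrelation_comp_mul_left]
  exact star_averagedFourier_mul_comp_mul_left ρ _ (fun g => f₂ g j) hσ

end FiniteGroup

theorem fourierPerm_eq_averagedFourier {n m : ℕ} (u : Equiv.Perm (Fin n) → ℂ)
    (ρ : Equiv.Perm (Fin n) → Matrix (Fin m) (Fin m) ℂ) :
    fourierPerm u ρ = averagedFourier u ρ := by
  rw [fourierPerm, averagedFourier, Finset.expect, ← NNRat.cast_smul_eq_nnqsmul ℂ,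
    Finset.card_univ, Fintype.card_perm, Fintype.card_fin, NNRat.cast_inv, NNRat.cast_natCast]

theorem rhatMulti_eq_averagedFourier {n d m p : ℕ} (f : Equiv.Perm (Fin n) → (Fin d → ℂ))
    (I : Fin p → Fin d) (i : Fin d) (τ : Fin p → Equiv.Perm (Fin n))
    (ρ : Equiv.Perm (Fin n) → Matrix (Fin m) (Fin m) ℂ) :
    rhatMulti f I i τ ρ = averagedFourier (multiCorrelation f I i τ) ρ :=
  fourierPerm_eq_averagedFourier (multiCorrelation f I i τ) ρ

/-- Let `n ≥ 1`, `d ≥ 1`, `k ≥ 3`, and let `ρ : S_n → GL_m(ℂ)` be a unitary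
representation. If `f₁(σ) = f₂(σ̄σ)` for a fixed `σ̄` and all `σ`, then for every
`G_{k-2} ∈ (S_n)^{k-2}` and every multi-index `I_k = (i₁,…,i_{k-2}, i, j) ∈ [d]^k`, the
`k`-Spectrum entries coincide:
`r̂^(k)_{f₁,I_{k-1}}(G_{k-2}, ρ)† f̂₁,ᵢₖ(ρ) = r̂^(k)_{f₂,I_{k-1}}(G_{k-2}, ρ)† f̂₂,ᵢₖ(ρ)`. -/
theorem kSpectrum_left_translation_invariant
    (n d k m : ℕ) (hn : 1 ≤ n) (hd : 1 ≤ d) (hk : 3 ≤ k)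
    (ρ : Equiv.Perm (Fin n) → Matrix (Fin m) (Fin m) ℂ)
    (hρ_one : ρ 1 = 1)
    (hρ_mul : ∀ a b : Equiv.Perm (Fin n), ρ (a * b) = ρ a * ρ b)
    (hρ_unitary : ∀ g : Equiv.Perm (Fin n), (ρ g)ᴴ * ρ g = 1)
    (f₁ f₂ : Equiv.Perm (Fin n) → (Fin d → ℂ)) (σbar : Equiv.Perm (Fin n))
    (hf : ∀ σ : Equiv.Perm (Fin n), f₁ σ = f₂ (σbar * σ))
    (G : Fin (k - 2) → Equiv.Perm (Fin n))
    (I : Fin (k - 2) → Fin d) (i j : Fin d) :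
    (rhatMulti f₁ I i G ρ)ᴴ * fourierPerm (fun g => f₁ g j) ρ
      = (rhatMulti f₂ I i G ρ)ᴴ * fourierPerm (fun g => f₂ g j) ρ := by
  simp only [rhatMulti_eq_averagedFourier, fourierPerm_eq_averagedFourier]
  exact kSpectrum_left_translation_invariant_general ⟨ρ, hρ_mul⟩ (hρ_unitary σbar) hf G I i j
end

section
/- Let n ≥ 3 and let A be the adjacency matrix of a simple undirected graph on n vertices (A symmetric, entries in {0,1}, zero diagonal). Then the third correlation of f_A evaluated at the pair of transpositions ((n−2,n), (n−2,n−1)) satisfies S^(3)_{f_A}((n−2,n), (n−2,n−1)) = (1/|S_n|) ∑_{g∈S_n} A_{g(n),g(n−1)} A_{g(n−2),g(n−1)} A_{g(n),g(n−2)} = 6T / (n(n−1)(n−2)), where T is the number of triangles of the graph (3-element vertex sets that are pairwise adjacent). -/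
/-!
Averaging a function over `Perm V` along the orbit of a `k`-subset is the same as averaging it over
all `k`-subsets, because `Perm V` acts transitively on them. For three distinct positions `a, b, c`
the product of the three matrix entries at `g a, g b, g c` is the indicator that `g • {a, b, c}` is
a triangle, so its average is the proportion of triangles among the `3`-subsets.
-/

open Finset
open scoped Nat Pointwise

section Averaging

variable {M : Type*} [AddCommMonoid M]

/- Replacing `x` by `h • x` only reindexes the sum over the group, so all points of `X` give the
same sum; summing over `X` and exchanging the order of summation gives the right-hand side. -/
theorem card_nsmul_sum_smul_eq {G X : Type*} [Group G] [Fintype G] [Fintype X] [MulAction G X]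
    [MulAction.IsPretransitive G X] (f : X → M) (x : X) :
    Fintype.card X • ∑ g : G, f (g • x) = Fintype.card G • ∑ y, f y := by
  have sum_eq (y : X) : ∑ g : G, f (g • y) = ∑ g : G, f (g • x) := by
    obtain ⟨h, rfl⟩ := MulAction.exists_smul_eq G x y
    simpa only [smul_smul, Equiv.coe_mulRight] using
      Equiv.sum_comp (Equiv.mulRight h) fun g => f (g • x)
  calc
    Fintype.card X • ∑ g : G, f (g • x) = ∑ y : X, ∑ g : G, f (g • y) := by
      simp only [sum_eq, sum_const, card_univ]
    _ = ∑ g : G, ∑ y : X, f (g • y) := sum_comm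
    _ = ∑ _g : G, ∑ y : X, f y :=
      sum_congr rfl fun g _ => Equiv.sum_comp (MulAction.toPerm g) f
    _ = Fintype.card G • ∑ y, f y := by simp only [sum_const, card_univ]

theorem choose_nsmul_sum_perm_smul_eq {V : Type*} [Fintype V] [DecidableEq V]
    (f : Finset V → M) (s : Finset V) :
    (Fintype.card V).choose #s • ∑ g : Equiv.Perm V, f (g • s) =
      (Fintype.card V)! • ∑ t ∈ univ.powersetCard #s, f t := by
  have : MulAction.IsPretransitive (Equiv.Perm V) (Set.powersetCard V #s) :=
    Set.powersetCard.isPretransitive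
  have card_eq : Fintype.card (Set.powersetCard V #s) = (Fintype.card V).choose #s := by
    rw [← Nat.card_eq_fintype_card, Set.powersetCard.card, Nat.card_eq_fintype_card]
  have sum_eq : ∑ t : Set.powersetCard V #s, f t = ∑ t ∈ univ.powersetCard #s, f t :=
    (sum_subtype _ (fun t => by simp [Set.powersetCard.mem_iff]) f).symm
  simpa only [card_eq, sum_eq, Fintype.card_perm, Set.powersetCard.coe_smul,
    Set.powersetCard.val_ofCard] using
    card_nsmul_sum_smul_eq (G := Equiv.Perm V) (fun t : Set.powersetCard V #s => f t)
      (Set.powersetCard.ofCard rfl)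

end Averaging

theorem mul_sub_one_mul_sub_two_eq_six_mul_choose (n : ℕ) :
    n * (n - 1) * (n - 2) = 6 * n.choose 3 := by
  calc
    n * (n - 1) * (n - 2) = n.descFactorial 3 := by
      simp only [Nat.descFactorial_succ, Nat.descFactorial_zero, Nat.sub_zero]
      ring
    _ = 6 * n.choose 3 := n.descFactorial_eq_factorial_mul_choose 3

section Triangles

variable {V : Type*}

/-- A triangle of the graph with adjacency matrix `A`, as a set of three vertices. Only
off-diagonal entries are inspected, so loops are ignored. -/
def IsTriangle {R : Type*} [One R] (A : Matrix V V R) (s : Finset V) : Prop :=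
  #s = 3 ∧ (s : Set V).Pairwise fun i j => A i j = 1

theorem isTriangle_triple_iff [DecidableEq V] {R : Type*} [One R] {A : Matrix V V R}
    (hA : A.IsSymm) {i j k : V} (hij : i ≠ j) (hik : i ≠ k) (hjk : j ≠ k) :
    IsTriangle A {i, j, k} ↔ A i j = 1 ∧ A k j = 1 ∧ A i k = 1 := by
  have card_eq : #{i, j, k} = 3 := card_triple_eq_three_iff.2 ⟨hij, hik, hjk⟩
  have : Std.Symm fun i j => A i j = 1 := ⟨fun i j h => (hA.apply i j).trans h⟩
  simp [IsTriangle, card_eq, Set.pairwise_insert_of_symm, hij, hik, hjk, hA.apply j k, and_comm,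
    and_assoc]

theorem mul_mul_eq_ite_isTriangle [DecidableEq V] {R : Type*} [MonoidWithZero R]
    {A : Matrix V V R} [DecidablePred (IsTriangle A)] (hA : A.IsSymm)
    (h01 : ∀ i j, i ≠ j → A i j = 0 ∨ A i j = 1) {i j k : V} (hij : i ≠ j) (hik : i ≠ k)
    (hjk : j ≠ k) :
    A i j * A k j * A i k = if IsTriangle A {i, j, k} then 1 else 0 := by
  have triangle_iff := isTriangle_triple_iff hA hij hik hjk
  rcases h01 i j hij with h₁ | h₁ <;> rcases h01 k j hjk.symm with h₂ | h₂ <;>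
    rcases h01 i k hik with h₃ | h₃ <;> simp [triangle_iff, h₁, h₂, h₃]

variable [Fintype V] [DecidableEq V]

theorem choose_three_mul_sum_perm_eq_factorial_mul_ncard {R : Type*} [Semiring R] {A : Matrix V V R}
    (hA : A.IsSymm) (h01 : ∀ i j, i ≠ j → A i j = 0 ∨ A i j = 1)
    {a b c : V} (hab : a ≠ b) (hac : a ≠ c) (hbc : b ≠ c) :
    ((Fintype.card V).choose 3 : R) *
        ∑ g : Equiv.Perm V, A (g a) (g b) * A (g c) (g b) * A (g a) (g c) =
      ((Fintype.card V)! : R) * ({s | IsTriangle A s}.ncard : R) := by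
  have : DecidablePred (IsTriangle A) := Classical.decPred _
  let indicator (s : Finset V) : R := if IsTriangle A s then 1 else 0
  have term_eq (g : Equiv.Perm V) :
      A (g a) (g b) * A (g c) (g b) * A (g a) (g c) = indicator (g • {a, b, c}) := by
    simpa [indicator, smul_finset_insert] using mul_mul_eq_ite_isTriangle hA h01
      (g.injective.ne hab) (g.injective.ne hac) (g.injective.ne hbc)
  have sum_indicator : ∑ s ∈ univ.powersetCard 3, indicator s = {s | IsTriangle A s}.ncard := by
    rw [sum_boole, ← Set.ncard_coe_finset]
    congr 2
    ext s
    simpa using fun h : IsTriangle A s => h.1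
  have card_eq : #{a, b, c} = 3 := card_triple_eq_three_iff.2 ⟨hab, hac, hbc⟩
  simpa only [term_eq, card_eq, sum_indicator, nsmul_eq_mul] using
    choose_nsmul_sum_perm_smul_eq indicator {a, b, c}

theorem thirdCorrelation_triangles_general {K : Type*} [Semifield K] [CharZero K]
    {A : Matrix V V K} (hA : A.IsSymm) (h01 : ∀ i j, i ≠ j → A i j = 0 ∨ A i j = 1)
    {a b c : V} (hab : a ≠ b) (hac : a ≠ c) (hbc : b ≠ c) :
    ((Fintype.card V)! : K)⁻¹ *
        ∑ g : Equiv.Perm V, A (g a) (g b) * A (g c) (g b) * A (g a) (g c) =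
      6 * ({s | IsTriangle A s}.ncard : K) /
        ((Fintype.card V * (Fintype.card V - 1) * (Fintype.card V - 2) : ℕ) : K) := by
  have card_ge : 3 ≤ Fintype.card V :=
    card_triple_eq_three_iff.2 ⟨hab, hac, hbc⟩ ▸ card_le_univ _
  have choose_ne : ((Fintype.card V).choose 3 : K) ≠ 0 :=
    Nat.cast_ne_zero.2 (Nat.choose_pos card_ge).ne'
  have factorial_ne : ((Fintype.card V)! : K) ≠ 0 :=
    Nat.cast_ne_zero.2 (Nat.factorial_ne_zero _)
  calc
    ((Fintype.card V)! : K)⁻¹ *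
          ∑ g : Equiv.Perm V, A (g a) (g b) * A (g c) (g b) * A (g a) (g c) =
        ({s | IsTriangle A s}.ncard : K) / ((Fintype.card V).choose 3 : K) := by
      rw [inv_mul_eq_div, div_eq_div_iff factorial_ne choose_ne, mul_comm,
        choose_three_mul_sum_perm_eq_factorial_mul_ncard hA h01 hab hac hbc, mul_comm]
    _ = 6 * ({s | IsTriangle A s}.ncard : K) / ((6 * (Fintype.card V).choose 3 : ℕ) : K) := by
      rw [Nat.cast_mul, Nat.cast_ofNat, mul_div_mul_left _ _ (by norm_num)]
    _ = _ := by rw [mul_sub_one_mul_sub_two_eq_six_mul_choose]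

end Triangles

/-- Let `n ≥ 3` and `A` the adjacency matrix of a simple undirected graph on
`n` vertices. Then the third correlation of `f_A` at the pair of transpositions
`((n-2,n), (n-2,n-1))` satisfies
`S^(3)_{f_A}((n-2,n),(n-2,n-1)) = (1/n!) ∑_g A_{g(n),g(n-1)} A_{g(n-2),g(n-1)} A_{g(n),g(n-2)}
  = 6T / (n(n-1)(n-2))`,
where `T` is the number of triangles (3-element vertex sets that are pairwise adjacent). -/
theorem thirdCorrelation_triangles
    (n : ℕ) (hn : 3 ≤ n) (A : Matrix (Fin n) (Fin n) ℂ)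
    (hsymm : ∀ i j : Fin n, A i j = A j i)
    (hent : ∀ i j : Fin n, A i j = 0 ∨ A i j = 1)
    (hdiag : ∀ i : Fin n, A i i = 0)
    (T : ℕ)
    (hT : T = Set.ncard {s : Finset (Fin n) |
        s.card = 3 ∧ ∀ i ∈ s, ∀ j ∈ s, i ≠ j → A i j = 1}) :
    ((Nat.factorial n : ℂ))⁻¹ *
        (∑ g : Equiv.Perm (Fin n),
          A (g ⟨n - 1, by omega⟩) (g ⟨n - 2, by omega⟩) *
            A (g ⟨n - 3, by omega⟩) (g ⟨n - 2, by omega⟩) *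
            A (g ⟨n - 1, by omega⟩) (g ⟨n - 3, by omega⟩))
      = 6 * (T : ℂ) / ((n * (n - 1) * (n - 2) : ℕ) : ℂ) := by
  simpa only [hT, Fintype.card_fin, IsTriangle, Set.Pairwise, mem_coe] using
    thirdCorrelation_triangles_general (.ext fun i j => hsymm j i) (fun i j _ => hent i j)
      (a := ⟨n - 1, by omega⟩) (b := ⟨n - 2, by omega⟩) (c := ⟨n - 3, by omega⟩)
      (by grind) (by grind) (by grind)
end

section
/- Let n ≥ 4, let H ≤ S_n be the subgroup of permutations fixing both n−1 and n, let A be an n×n complex matrix, and let f_A(g) = A_{g(n), g(n−1)}. Then for every σ ∈ S_n, ∑_{h∈H} f_A(σ · h · (n−3,n−1)(n−2,n)) = (n−4)! · ∑_{j,l ∈ {1,…,n−2}, j≠l} A_{σ(j), σ(l)}. Equivalently, the average (1/|H|) ∑_{h∈H} f_A(σ h (n−3,n−1)(n−2,n)) equals (1/((n−2)(n−3))) ∑_{j≠l ∈ {1,…,n−2}} A_{σ(j), σ(l)}. -/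
/-- The subgroup of `S_n` consisting of permutations fixing both of the last two points
(the points `n-1` and `n` in 1-indexed notation, i.e. the indices `≥ n-2` in `Fin n`);
it has `(n-2)!` elements. -/
def fixLastTwo (n : ℕ) : Subgroup (Equiv.Perm (Fin n)) where
  carrier := {σ | ∀ i : Fin n, n - 2 ≤ (i : ℕ) → σ i = i}
  one_mem' := fun _ _ => rfl
  mul_mem' := by
    intro a b ha hb i hi
    simp only [Set.mem_setOf_eq] at ha hb ⊢
    rw [Equiv.Perm.mul_apply, hb i hi, ha i hi]
  inv_mem' := by
    intro a ha i hi
    simp only [Set.mem_setOf_eq] at ha ⊢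
    rw [Equiv.Perm.inv_eq_iff_eq]
    exact (ha i hi).symm

instance (n : ℕ) : DecidablePred (· ∈ fixLastTwo n) := fun σ =>
  decidable_of_iff (∀ i : Fin n, n - 2 ≤ (i : ℕ) → σ i = i) Iff.rfl

/-!
`S_m` acts transitively on the `k`-tuples of distinct points, and each of them has a stabilizer
of order `(m - k)!`. Hence a function of the tuple `(g x₁, …, g x_k)`, summed over `g ∈ S_m`, is
`(m - k)!` times its sum over all such tuples. The double transposition carries `n` and `n - 1`
to `n - 2` and `n - 3`, two distinct points of `{1, …, n - 2}`, on which `H` acts as `S_{n-2}`;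
take `m = n - 2` and `k = 2`.
-/

open Equiv MulAction
open scoped Nat

section Action

variable {G X : Type*} [Group G] [MulAction G X] [IsPretransitive G X]

theorem card_smul_eq_eq_card_stabilizer (x y : X) :
    Nat.card {g : G // g • x = y} = Nat.card (stabilizer G x) := by
  obtain ⟨k, rfl⟩ := exists_smul_eq G x y
  exact Nat.card_congr <| (Equiv.mulLeft k⁻¹).subtypeEquiv fun g => by
    rw [coe_mulLeft, mem_stabilizer_iff, mul_smul, inv_smul_eq_iff]

theorem sum_smul_eq_card_stabilizer_nsmul [Fintype G] [Fintype X] {M : Type*} [AddCommMonoid M]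
    (F : X → M) (x : X) :
    ∑ g : G, F (g • x) = Nat.card (stabilizer G x) • ∑ y, F y := by
  classical
  calc ∑ g : G, F (g • x)
      = ∑ y, ∑ _g : {g : G // g • x = y}, F y := by
        rw [← Fintype.sum_fiberwise (fun g : G => g • x)]
        exact Fintype.sum_congr _ _ fun y => Fintype.sum_congr _ _ fun g => congrArg F g.2
    _ = Nat.card (stabilizer G x) • ∑ y, F y := by
        simp only [Finset.sum_const, Finset.card_univ, ← Nat.card_eq_fintype_card,
          card_smul_eq_eq_card_stabilizer, Finset.smul_sum]

end Action

section Swap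

variable {α : Type*} [DecidableEq α] {a b c d : α}

theorem swap_mul_swap_apply_right_of_ne (hba : b ≠ a) (hbc : b ≠ c) :
    (swap a c * swap b d) d = b := by
  rw [Perm.mul_apply, swap_apply_right, swap_apply_of_ne_of_ne hba hbc]

theorem swap_mul_swap_apply_left_of_ne (hcb : c ≠ b) (hcd : c ≠ d) :
    (swap a c * swap b d) c = a := by
  rw [Perm.mul_apply, swap_apply_of_ne_of_ne hcb hcd, swap_apply_right]

end Swap

section Perm

variable {α M : Type*} [AddCommMonoid M]

theorem card_stabilizer_perm_embedding [Fintype α] {k : ℕ} (x : Fin k ↪ α) :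
    Nat.card (stabilizer (Perm α) x) = (Fintype.card α - k)! := by
  classical
  have := Perm.isMultiplyPretransitive α k
  have hk : k ≤ Fintype.card α := by simpa using Fintype.card_le_of_embedding x
  have hcard : Nat.card (Fin k ↪ α) = (Fintype.card α).descFactorial k := by
    rw [Nat.card_eq_fintype_card, Fintype.card_embedding_eq, Fintype.card_fin]
  refine Nat.eq_of_mul_eq_mul_right (Nat.descFactorial_pos.2 hk) ?_
  rw [Nat.factorial_mul_descFactorial hk, ← hcard, ← index_stabilizer_of_transitive (Perm α) x,
    Subgroup.card_mul_index, Nat.card_perm, Nat.card_eq_fintype_card]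

theorem sum_perm_smul_embedding [Fintype α] [DecidableEq α] {k : ℕ} (F : (Fin k ↪ α) → M)
    (x : Fin k ↪ α) :
    ∑ g : Perm α, F (g • x) = (Fintype.card α - k)! • ∑ y, F y := by
  have := Perm.isMultiplyPretransitive α k
  rw [sum_smul_eq_card_stabilizer_nsmul, card_stabilizer_perm_embedding]

theorem sum_embedding_fin_two [DecidableEq α] (s : Finset α) (F : α → α → M) :
    ∑ y : Fin 2 ↪ s, F (y 0) (y 1) = ∑ j ∈ s, ∑ l ∈ s.erase j, F j l := by
  rw [Finset.sum_sigma']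
  refine Finset.sum_bij (fun y _ => ⟨y 0, y 1⟩) ?_ ?_ ?_ ?_
  · intro y _
    have hy : (y 1 : α) ≠ y 0 := fun h => by simpa using y.injective (Subtype.ext h)
    simp [hy]
  · intro y _ z _ hyz
    obtain ⟨h₀, h₁⟩ := Sigma.mk.inj hyz
    ext i
    fin_cases i
    exacts [h₀, eq_of_heq h₁]
  · rintro ⟨j, l⟩ hjl
    obtain ⟨hj, hlj, hl⟩ : j ∈ s ∧ l ≠ j ∧ l ∈ s := by simpa using hjl
    exact ⟨Function.Embedding.embFinTwo (a := ⟨j, hj⟩) (b := ⟨l, hl⟩) (by simpa using hlj.symm),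
      Finset.mem_univ _, rfl⟩
  · exact fun y _ => rfl

theorem sum_fixingSubgroup_compl_apply_apply [DecidableEq α] (s : Finset α)
    [Fintype (fixingSubgroup (Perm α) (s : Set α)ᶜ)] (F : α → α → M) {a b : α}
    (ha : a ∈ s) (hb : b ∈ s) (hab : a ≠ b) :
    ∑ h : fixingSubgroup (Perm α) (s : Set α)ᶜ, F (h.1 a) (h.1 b) =
      (s.card - 2)! • ∑ j ∈ s, ∑ l ∈ s.erase j, F j l := by
  let e : Perm s ≃ fixingSubgroup (Perm α) (s : Set α)ᶜ :=
    (Perm.subtypeEquivSubtypePerm (· ∈ s)).trans <| Equiv.subtypeEquivRight fun h => by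
      simp [mem_fixingSubgroup_iff]
  have he (g : Perm s) {i : α} (hi : i ∈ s) : (e g).1 i = g ⟨i, hi⟩ :=
    Perm.ofSubtype_apply_of_mem g hi
  let x : Fin 2 ↪ s := Function.Embedding.embFinTwo (a := ⟨a, ha⟩) (b := ⟨b, hb⟩) (by simpa)
  calc ∑ h : fixingSubgroup (Perm α) (s : Set α)ᶜ, F (h.1 a) (h.1 b)
      = ∑ g : Perm s, F ((g • x) 0) ((g • x) 1) :=
        (Fintype.sum_equiv e _ _ fun g => by rw [he g ha, he g hb]; rfl).symm
    _ = (s.card - 2)! • ∑ j ∈ s, ∑ l ∈ s.erase j, F j l := by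
        rw [sum_perm_smul_embedding (fun y : Fin 2 ↪ s => F (y 0) (y 1)), sum_embedding_fin_two,
          Fintype.card_coe]

end Perm

theorem fixLastTwo_eq_fixingSubgroup (n : ℕ) :
    fixLastTwo n = fixingSubgroup (Perm (Fin n)) {i : Fin n | n - 2 ≤ (i : ℕ)} := by
  ext h
  exact (mem_fixingSubgroup_iff (Perm (Fin n))).symm

theorem sum_fixLastTwo_apply_apply {n : ℕ} {M : Type*} [AddCommMonoid M] (F : Fin n → Fin n → M)
    {a b : Fin n} (ha : (a : ℕ) < n - 2) (hb : (b : ℕ) < n - 2) (hab : a ≠ b) :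
    ∑ h : fixLastTwo n, F (h.1 a) (h.1 b) =
      (n - 4)! • ∑ j ∈ Finset.univ.filter (fun j : Fin n => (j : ℕ) < n - 2),
        ∑ l ∈ (Finset.univ.filter (fun l : Fin n => (l : ℕ) < n - 2)).erase j, F j l := by
  classical
  set s := Finset.univ.filter fun i : Fin n => (i : ℕ) < n - 2 with hs
  have hcard : s.card - 2 = n - 4 := by rw [hs, Fin.card_filter_val_lt]; omega
  have hH : fixLastTwo n = fixingSubgroup (Perm (Fin n)) (s : Set (Fin n))ᶜ := by
    rw [fixLastTwo_eq_fixingSubgroup]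
    congr 1
    ext i
    simp [hs]
  rw [← hcard, ← sum_fixingSubgroup_compl_apply_apply s F (by simpa [hs]) (by simpa [hs]) hab]
  exact Fintype.sum_equiv (MulEquiv.subgroupCongr hH).toEquiv _ _ fun _ => rfl

theorem factorial_sub_two_eq {n : ℕ} (hn : 4 ≤ n) :
    (n - 2)! = (n - 2) * (n - 3) * (n - 4)! := by
  rw [mul_assoc, Nat.sub_add_eq n 3 1, Nat.mul_factorial_pred (by omega : n - 3 ≠ 0),
    Nat.sub_add_eq n 2 1, Nat.mul_factorial_pred (by omega : n - 2 ≠ 0)]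

theorem sum_over_H_case_g7_general {K : Type*} [DivisionSemiring K] [CharZero K] {n : ℕ}
    (A : Matrix (Fin n) (Fin n) K) (σ τ : Perm (Fin n)) {a b : Fin n} (hab : a ≠ b)
    (ha : (τ a : ℕ) < n - 2) (hb : (τ b : ℕ) < n - 2) :
    (∑ h : fixLastTwo n, A ((σ * h.1 * τ) a) ((σ * h.1 * τ) b) =
      (n - 4)! * ∑ j ∈ Finset.univ.filter (fun j : Fin n => (j : ℕ) < n - 2),
        ∑ l ∈ (Finset.univ.filter (fun l : Fin n => (l : ℕ) < n - 2)).erase j, A (σ j) (σ l)) ∧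
    ((n - 2)! : K)⁻¹ * ∑ h : fixLastTwo n, A ((σ * h.1 * τ) a) ((σ * h.1 * τ) b) =
      (((n - 2) * (n - 3) : ℕ) : K)⁻¹ *
        ∑ j ∈ Finset.univ.filter (fun j : Fin n => (j : ℕ) < n - 2),
          ∑ l ∈ (Finset.univ.filter (fun l : Fin n => (l : ℕ) < n - 2)).erase j,
            A (σ j) (σ l) := by
  have hτab : τ a ≠ τ b := τ.injective.ne hab
  have hn : 4 ≤ n := by have := Fin.val_ne_of_ne hτab; omega
  have hsum := sum_fixLastTwo_apply_apply (fun i j => A (σ i) (σ j)) ha hb hτab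
  have hfactorial : ((n - 4)! : K) ≠ 0 := Nat.cast_ne_zero.2 (Nat.factorial_ne_zero _)
  simp only [Perm.mul_apply, hsum, nsmul_eq_mul, true_and]
  rw [factorial_sub_two_eq hn, Nat.cast_mul, Nat.cast_comm, mul_inv_rev, mul_assoc,
    inv_mul_cancel_left₀ hfactorial]

/-- Let `n ≥ 4`, `H = fixLastTwo n`, `A` an `n×n` complex matrix, and
`f_A(g) = A_{g(n), g(n-1)}`. Then for every `σ ∈ S_n`,
`∑_{h∈H} f_A(σ h (n-3,n-1)(n-2,n)) = (n-4)! ∑_{j≠l∈{1,…,n-2}} A_{σ(j), σ(l)}`; equivalently,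
`(1/|H|) ∑_{h∈H} f_A(σ h (n-3,n-1)(n-2,n)) = (1/((n-2)(n-3))) ∑_{j≠l} A_{σ(j), σ(l)}`.
(0-indexed, the double transposition is `(n-4,n-2)(n-3,n-1)`.) -/
theorem sum_over_H_case_g7
    (n : ℕ) (hn : 4 ≤ n) (A : Matrix (Fin n) (Fin n) ℂ) (σ : Equiv.Perm (Fin n)) :
    (∑ h : fixLastTwo n,
        A ((σ * (h : Equiv.Perm (Fin n)) *
              (Equiv.swap (⟨n - 4, by omega⟩ : Fin n) (⟨n - 2, by omega⟩ : Fin n) *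
                Equiv.swap (⟨n - 3, by omega⟩ : Fin n) (⟨n - 1, by omega⟩ : Fin n)))
            ⟨n - 1, by omega⟩)
          ((σ * (h : Equiv.Perm (Fin n)) *
              (Equiv.swap (⟨n - 4, by omega⟩ : Fin n) (⟨n - 2, by omega⟩ : Fin n) *
                Equiv.swap (⟨n - 3, by omega⟩ : Fin n) (⟨n - 1, by omega⟩ : Fin n)))
            ⟨n - 2, by omega⟩))
      = ((Nat.factorial (n - 4) : ℂ)) *
          ∑ j ∈ Finset.univ.filter (fun j : Fin n => (j : ℕ) < n - 2),
            ∑ l ∈ (Finset.univ.filter (fun l : Fin n => (l : ℕ) < n - 2)).erase j,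
              A (σ j) (σ l)
    ∧ ((Nat.factorial (n - 2) : ℂ))⁻¹ *
        (∑ h : fixLastTwo n,
          A ((σ * (h : Equiv.Perm (Fin n)) *
                (Equiv.swap (⟨n - 4, by omega⟩ : Fin n) (⟨n - 2, by omega⟩ : Fin n) *
                  Equiv.swap (⟨n - 3, by omega⟩ : Fin n) (⟨n - 1, by omega⟩ : Fin n)))
              ⟨n - 1, by omega⟩)
            ((σ * (h : Equiv.Perm (Fin n)) *
                (Equiv.swap (⟨n - 4, by omega⟩ : Fin n) (⟨n - 2, by omega⟩ : Fin n) *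
                  Equiv.swap (⟨n - 3, by omega⟩ : Fin n) (⟨n - 1, by omega⟩ : Fin n)))
              ⟨n - 2, by omega⟩))
      = ((((n - 2) * (n - 3) : ℕ)) : ℂ)⁻¹ *
          ∑ j ∈ Finset.univ.filter (fun j : Fin n => (j : ℕ) < n - 2),
            ∑ l ∈ (Finset.univ.filter (fun l : Fin n => (l : ℕ) < n - 2)).erase j,
              A (σ j) (σ l) :=
  sum_over_H_case_g7_general A σ _ (by grind)
    (by rw [swap_mul_swap_apply_right_of_ne] <;> grind)
    (by rw [swap_mul_swap_apply_left_of_ne] <;> grind)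
end
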